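/- For α > 0, the Fourier transform of the p-adic Bessel kernel J_α (namely J_α(x) = Γ_p(α)^{-1}(|x|_p^{α−1} − p^{α−1})1_{ℤ_p}(x) for α ≠ 1, and J_1(x) = (1−p^{-1}) log_p(p/|x|_p) 1_{ℤ_p}(x) for α = 1) is Ĵ_α(ξ) = (max{1, |ξ|_p})^{−α} for all ξ ∈ ℚ_p. -/

import Mathlib

open MeasureTheory

section BesselHelpers

variable {p : ℕ} [Fact p.Prime]

lemma bk_p_pos : (0 : ℝ) < p := by exact_mod_cast (Fact.out : p.Prime).pos

lemma bk_p_gt : (1 : ℝ) < p := by exact_mod_cast (Fact.out : p.Prime).one_lt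

/-- The ball of radius `p ^ (-n)`. -/
def bkB (p : ℕ) [Fact p.Prime] (n : ℕ) : Set ℚ_[p] := {x | ‖x‖ ≤ ((p : ℝ) ^ n)⁻¹}

lemma bkB_closed (n : ℕ) : IsClosed (bkB p n) :=
  isClosed_le continuous_norm continuous_const

lemma bkB_zero : bkB p 0 = {x : ℚ_[p] | ‖x‖ ≤ 1} := by simp [bkB]

lemma bkB_mono (n : ℕ) : bkB p n ⊆ bkB p 0 := by
  intro x hx
  simp only [bkB, Set.mem_ofPred_eq, pow_zero, inv_one] at *
  exact hx.trans (inv_le_one_of_one_le₀ (one_le_pow₀ bk_p_gt.le))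

lemma bkB_add (n : ℕ) {b : ℚ_[p]} (hb : b ∈ bkB p n) (x : ℚ_[p]) :
    x + b ∈ bkB p n ↔ x ∈ bkB p n := by
  simp only [bkB, Set.mem_ofPred_eq] at *
  constructor
  · intro h
    have := IsUltrametricDist.norm_add_le_max (x + b) (-b)
    rw [add_neg_cancel_right, norm_neg] at this
    exact this.trans (max_le h hb)
  · intro h
    exact (IsUltrametricDist.norm_add_le_max x b).trans (max_le h hb)

lemma bk_chi_norm (χ : AddChar ℚ_[p] ℂ) (hχ₁ : ∀ x : ℚ_[p], ‖x‖ ≤ 1 → χ x = 1)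
    (x : ℚ_[p]) : ‖χ x‖ = 1 := by
  obtain ⟨k, hk⟩ := pow_unbounded_of_one_lt ‖x‖ (bk_p_gt (p := p))
  have h1 : χ ((p ^ k : ℕ) • x) = 1 := by
    apply hχ₁
    rw [nsmul_eq_mul]
    push_cast
    rw [norm_mul, norm_pow, Padic.norm_p, inv_pow, inv_mul_le_iff₀ (pow_pos bk_p_pos k)]
    linarith
  rw [AddChar.map_nsmul_eq_pow] at h1
  exact Complex.norm_eq_one_of_pow_eq_one h1 (pow_ne_zero _ (Fact.out : p.Prime).ne_zero)

lemma bk_chi_cont (χ : AddChar ℚ_[p] ℂ) (hχ₁ : ∀ x : ℚ_[p], ‖x‖ ≤ 1 → χ x = 1) :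
    Continuous χ := by
  rw [continuous_iff_continuousAt]
  intro x
  have : (fun _ => χ x) =ᶠ[nhds x] χ := by
    filter_upwards [Metric.ball_mem_nhds x one_pos] with y hy
    have h2 : χ (y - x) = 1 := hχ₁ _ (by rw [← dist_eq_norm]; exact (Metric.mem_ball.1 hy).le)
    have h3 : y = (y - x) + x := by ring
    rw [h3, AddChar.map_add_eq_mul, h2, one_mul]
  exact continuousAt_const.congr this

lemma bk_level (ξ : ℚ_[p]) : ∃ m : ℕ, max 1 ‖ξ‖ = (p : ℝ) ^ m ∧
    ∀ n : ℕ, ‖ξ‖ ≤ (p : ℝ) ^ n ↔ m ≤ n := by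
  by_cases h : ‖ξ‖ ≤ 1
  · exact ⟨0, by simp [h], fun n => by simpa using h.trans (one_le_pow₀ bk_p_gt.le)⟩
  · have h0 : ξ ≠ 0 := by rintro rfl; simp at h
    have h1 := Padic.norm_eq_zpow_neg_valuation h0
    have h2 : 0 ≤ -ξ.valuation := by
      rw [Padic.norm_le_one_iff_val_nonneg] at h; omega
    obtain ⟨m, hm⟩ := Int.eq_ofNat_of_zero_le h2
    rw [hm, zpow_natCast] at h1
    refine ⟨m, by rw [max_eq_right (not_le.1 h).le, h1], fun n => ?_⟩
    rw [h1, pow_le_pow_iff_right₀ bk_p_gt]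

lemma bk_ball (x : ℚ_[p]) (hx0 : x ≠ 0) (hx : x ∈ bkB p 0) : ∃ k : ℕ,
    ‖x‖ = ((p : ℝ) ^ k)⁻¹ ∧ ∀ n : ℕ, x ∈ bkB p n ↔ n ≤ k := by
  have h1 := Padic.norm_eq_zpow_neg_valuation hx0
  rw [bkB_zero] at hx
  have h2 : 0 ≤ x.valuation := (Padic.norm_le_one_iff_val_nonneg x).1 hx
  obtain ⟨k, hk⟩ := Int.eq_ofNat_of_zero_le h2
  rw [hk, zpow_neg, zpow_natCast] at h1
  refine ⟨k, h1, fun n => ?_⟩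
  change ‖x‖ ≤ ((p : ℝ) ^ n)⁻¹ ↔ _
  rw [h1, inv_le_inv₀ (pow_pos bk_p_pos k) (pow_pos bk_p_pos n),
    pow_le_pow_iff_right₀ bk_p_gt]

lemma bk_J (α : ℝ) (hα : 0 < α) (k : ℕ) :
    (if α = 1 then (1 - (p : ℝ)⁻¹) * Real.logb p ((p : ℝ) / ((p : ℝ) ^ k)⁻¹)
      else ((1 - (p : ℝ) ^ (α - 1)) / (1 - (p : ℝ) ^ (-α)))⁻¹ *
            ((((p : ℝ) ^ k)⁻¹) ^ (α - 1) - (p : ℝ) ^ (α - 1)))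
    = ∑ n ∈ Finset.range (k + 1), (1 - (p : ℝ) ^ (-α)) * ((p : ℝ) ^ (1 - α)) ^ n := by
  have hp := bk_p_pos (p := p)
  have hp1 := bk_p_gt (p := p)
  rw [← Finset.mul_sum]
  split_ifs with h
  · subst h
    rw [div_inv_eq_mul, ← pow_succ', Real.logb_pow, Real.logb_self_eq_one hp1]
    simp [Real.rpow_neg_one]
  · have e1 : (p : ℝ) ^ (α - 1) = ((p : ℝ) ^ (1 - α))⁻¹ := by
      rw [← Real.rpow_neg hp.le]; congr 1; ring
    have e2 : (((p : ℝ) ^ k)⁻¹) ^ (α - 1) = ((p : ℝ) ^ (1 - α)) ^ k := by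
      rw [Real.inv_rpow (pow_pos hp k).le, ← Real.rpow_neg (pow_pos hp k).le,
        ← Real.rpow_natCast, ← Real.rpow_natCast, ← Real.rpow_mul hp.le, ← Real.rpow_mul hp.le]
      congr 1; ring
    rw [e2, e1]
    have hr0 : 0 < (p : ℝ) ^ (1 - α) := Real.rpow_pos_of_pos hp _
    have hr1 : (p : ℝ) ^ (1 - α) ≠ 1 := by
      intro h1
      rcases lt_trichotomy (1 - α) 0 with h2 | h2 | h2
      · exact (Real.rpow_lt_one_of_one_lt_of_neg hp1 h2).ne h1
      · exact h (by linarith)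
      · exact (Real.one_lt_rpow hp1 h2).ne' h1
    generalize (p : ℝ) ^ (1 - α) = r at *
    rw [geom_sum_eq hr1, inv_div]
    have hr2 : r - 1 ≠ 0 := sub_ne_zero.2 hr1
    have hr3 : 1 - r⁻¹ = (r - 1) / r := by field_simp
    rw [hr3, pow_succ]
    field_simp

variable [MeasurableSpace ℚ_[p]] [BorelSpace ℚ_[p]]
  (μ : Measure ℚ_[p]) [μ.IsAddHaarMeasure]

lemma bk_integrable (hμ : μ {x : ℚ_[p] | ‖x‖ ≤ 1} = 1) (χ : AddChar ℚ_[p] ℂ)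
    (hχ₁ : ∀ x : ℚ_[p], ‖x‖ ≤ 1 → χ x = 1) (n : ℕ) (ξ : ℚ_[p]) :
    IntegrableOn (fun x => χ (ξ * x)) (bkB p n) μ := by
  have hfin : μ (bkB p n) < ⊤ := by
    refine (measure_mono (bkB_mono n)).trans_lt ?_
    rw [bkB_zero, hμ]; exact ENNReal.one_lt_top
  refine IntegrableOn.of_bound hfin ?_ 1 ?_
  · exact ((bk_chi_cont χ hχ₁).comp (continuous_const.mul continuous_id)).aestronglyMeasurable
  · exact Filter.Eventually.of_forall fun x => (bk_chi_norm χ hχ₁ _).le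

lemma bk_int_zero (χ : AddChar ℚ_[p] ℂ) (hχ₂ : ∀ x : ℚ_[p], 1 < ‖x‖ → χ x ≠ 1)
    (n : ℕ) (ξ : ℚ_[p]) (hξ : (p : ℝ) ^ n < ‖ξ‖) :
    ∫ x in bkB p n, χ (ξ * x) ∂μ = 0 := by
  have hb : ((p : ℚ_[p]) ^ n) ∈ bkB p n := by
    simp [bkB]
  set b : ℚ_[p] := (p : ℚ_[p]) ^ n with hbdef
  have hne : χ (ξ * b) ≠ 1 := by
    apply hχ₂
    rw [hbdef, norm_mul, norm_pow, Padic.norm_p, inv_pow, ← div_eq_mul_inv,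
      one_lt_div (pow_pos bk_p_pos n)]
    exact hξ
  rw [← integral_indicator (bkB_closed n).measurableSet]
  have h := integral_add_right_eq_self (μ := μ)
    ((bkB p n).indicator (fun x => χ (ξ * x))) b
  have h2 : ∀ x, (bkB p n).indicator (fun x => χ (ξ * x)) (x + b)
      = χ (ξ * b) * (bkB p n).indicator (fun x => χ (ξ * x)) x := by
    intro x
    by_cases hx : x ∈ bkB p n
    · rw [Set.indicator_of_mem hx, Set.indicator_of_mem ((bkB_add n hb x).2 hx), mul_add,
        AddChar.map_add_eq_mul, mul_comm]
    · rw [Set.indicator_of_notMem hx, Set.indicator_of_notMem (fun h => hx ((bkB_add n hb x).1 h)),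
        mul_zero]
  simp_rw [h2] at h
  rw [integral_const_mul] at h
  have h3 : (χ (ξ * b) - 1) * ∫ x, (bkB p n).indicator (fun x => χ (ξ * x)) x ∂μ = 0 := by
    rw [sub_mul, h]; ring
  exact (mul_eq_zero.1 h3).resolve_left (sub_ne_zero.2 hne)

lemma bk_meas (hμ : μ {x : ℚ_[p] | ‖x‖ ≤ 1} = 1) (χ : AddChar ℚ_[p] ℂ)
    (hχ₁ : ∀ x : ℚ_[p], ‖x‖ ≤ 1 → χ x = 1) (hχ₂ : ∀ x : ℚ_[p], 1 < ‖x‖ → χ x ≠ 1)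
    (n : ℕ) : μ.real (bkB p n) = ((p : ℝ) ^ n)⁻¹ := by
  have hp0 : (p : ℚ_[p]) ≠ 0 := by exact_mod_cast (Fact.out : p.Prime).ne_zero
  have hpR : (0 : ℝ) < (p : ℝ) ^ n := pow_pos bk_p_pos n
  have hnorm : ∀ y : ℚ_[p], ‖((p : ℚ_[p]) ^ n)⁻¹ * y‖ = (p : ℝ) ^ n * ‖y‖ := by
    intro y
    rw [norm_mul, norm_inv, norm_pow, Padic.norm_p, inv_pow, inv_inv]
  have key : ∫ x in bkB p 0, ∑ a ∈ Finset.range (p ^ n),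
      χ (((a : ℚ_[p]) * ((p : ℚ_[p]) ^ n)⁻¹) * x) ∂μ = 1 := by
    rw [integral_finsetSum _ (fun a _ => bk_integrable μ hμ χ hχ₁ 0 _)]
    rw [Finset.sum_eq_single 0]
    · simp [bkB_zero, Measure.real, hμ]
    · intro a ha ha0
      apply bk_int_zero μ χ hχ₂
      rw [mul_comm, hnorm, pow_zero]
      have : ¬ (‖((a : ℤ) : ℚ_[p])‖ ≤ (p : ℝ) ^ (-n : ℤ)) := by
        rw [Padic.norm_int_le_pow_iff_dvd]
        intro hd
        have hd' : p ^ n ∣ a := by exact_mod_cast hd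
        exact absurd (Nat.le_of_dvd (Nat.pos_of_ne_zero ha0) hd')
          (not_le.2 (Finset.mem_range.1 ha))
      rw [not_le, zpow_neg, zpow_natCast, Int.cast_natCast] at this
      calc (1 : ℝ) = (p : ℝ) ^ n * ((p : ℝ) ^ n)⁻¹ := (mul_inv_cancel₀ hpR.ne').symm
        _ < _ := by gcongr
    · intro h
      exact absurd (Finset.mem_range.2 (pow_pos (Fact.out : p.Prime).pos n)) h
  have hpt : ∀ x ∈ bkB p 0, ∑ a ∈ Finset.range (p ^ n),
      χ (((a : ℚ_[p]) * ((p : ℚ_[p]) ^ n)⁻¹) * x)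
      = (bkB p n).indicator (fun _ => ((p : ℂ) ^ n)) x := by
    intro x hx
    have hterm : ∀ a : ℕ, χ (((a : ℚ_[p]) * ((p : ℚ_[p]) ^ n)⁻¹) * x)
        = χ (((p : ℚ_[p]) ^ n)⁻¹ * x) ^ a := by
      intro a
      rw [← AddChar.map_nsmul_eq_pow, nsmul_eq_mul, mul_assoc]
    simp_rw [hterm]
    by_cases hxn : x ∈ bkB p n
    · rw [Set.indicator_of_mem hxn]
      have : χ (((p : ℚ_[p]) ^ n)⁻¹ * x) = 1 := by
        apply hχ₁
        rw [hnorm]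
        have h5 : ‖x‖ ≤ ((p : ℝ) ^ n)⁻¹ := hxn
        calc (p : ℝ) ^ n * ‖x‖ ≤ (p : ℝ) ^ n * ((p : ℝ) ^ n)⁻¹ := by gcongr
          _ = 1 := mul_inv_cancel₀ hpR.ne'
      simp [this]
    · rw [Set.indicator_of_notMem hxn]
      have h5 : ((p : ℝ) ^ n)⁻¹ < ‖x‖ := not_le.1 hxn
      have hne : χ (((p : ℚ_[p]) ^ n)⁻¹ * x) ≠ 1 := by
        apply hχ₂
        rw [hnorm]
        calc (1 : ℝ) = (p : ℝ) ^ n * ((p : ℝ) ^ n)⁻¹ := (mul_inv_cancel₀ hpR.ne').symm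
          _ < _ := by gcongr
      rw [geom_sum_eq hne, ← hterm]
      have : ((p ^ n : ℕ) : ℚ_[p]) * ((p : ℚ_[p]) ^ n)⁻¹ * x = x := by
        push_cast
        rw [mul_inv_cancel₀ (pow_ne_zero n hp0), one_mul]
      rw [this, hχ₁ x (by rw [bkB_zero] at hx; exact hx)]
      simp
  rw [setIntegral_congr_fun (bkB_closed 0).measurableSet hpt,
    setIntegral_indicator (bkB_closed n).measurableSet,
    Set.inter_eq_right.2 (bkB_mono n), setIntegral_const] at key
  have key2 : μ.real (bkB p n) * (p : ℝ) ^ n = 1 := by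
    rw [Complex.real_smul] at key
    exact_mod_cast key
  exact eq_inv_of_mul_eq_one_left key2

lemma bk_int (hμ : μ {x : ℚ_[p] | ‖x‖ ≤ 1} = 1) (χ : AddChar ℚ_[p] ℂ)
    (hχ₁ : ∀ x : ℚ_[p], ‖x‖ ≤ 1 → χ x = 1) (hχ₂ : ∀ x : ℚ_[p], 1 < ‖x‖ → χ x ≠ 1)
    (n : ℕ) (ξ : ℚ_[p]) :
    ∫ x in bkB p n, χ (ξ * x) ∂μ = if ‖ξ‖ ≤ (p : ℝ) ^ n then ((((p : ℝ) ^ n)⁻¹ : ℝ) : ℂ) else 0 := by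
  have hpR : (0 : ℝ) < (p : ℝ) ^ n := pow_pos bk_p_pos n
  split_ifs with h
  · have : ∀ x ∈ bkB p n, χ (ξ * x) = (fun _ => (1 : ℂ)) x := by
      intro x hx
      apply hχ₁
      have h5 : ‖x‖ ≤ ((p : ℝ) ^ n)⁻¹ := hx
      rw [norm_mul]
      calc ‖ξ‖ * ‖x‖ ≤ (p : ℝ) ^ n * ((p : ℝ) ^ n)⁻¹ := by gcongr
        _ = 1 := mul_inv_cancel₀ hpR.ne'
    rw [setIntegral_congr_fun (bkB_closed n).measurableSet this, setIntegral_const,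
      bk_meas μ hμ χ hχ₁ hχ₂ n]
    simp
  · exact bk_int_zero μ χ hχ₂ n ξ (not_le.1 h)

end BesselHelpers

/-- For `α > 0`, the Fourier transform of the p-adic Bessel
kernel `J_α` (with `J_α(x) = Γ_p(α)^{-1}(|x|_p^{α−1} − p^{α−1})1_{ℤ_p}(x)` for
`α ≠ 1` and `J_1(x) = (1−p^{-1}) log_p(p/|x|_p) 1_{ℤ_p}(x)`) is
`Ĵ_α(ξ) = (max{1, |ξ|_p})^{−α}` for all `ξ ∈ ℚ_p`. -/
theorem bessel_kernel_fourier_transform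
    (p : ℕ) [Fact p.Prime]
    [MeasurableSpace ℚ_[p]] [BorelSpace ℚ_[p]]
    (μ : Measure ℚ_[p]) [μ.IsAddHaarMeasure]
    (hμ : μ {x : ℚ_[p] | ‖x‖ ≤ 1} = 1)
    (χ : AddChar ℚ_[p] ℂ)
    (hχ₁ : ∀ x : ℚ_[p], ‖x‖ ≤ 1 → χ x = 1)
    (hχ₂ : ∀ x : ℚ_[p], 1 < ‖x‖ → χ x ≠ 1)
    (α : ℝ) (hα : 0 < α)
    (Jα : ℚ_[p] → ℝ)
    (hJα : Jα = fun x =>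
      if α = 1 then (1 - (p : ℝ)⁻¹) * Real.logb p ((p : ℝ) / ‖x‖)
      else ((1 - (p : ℝ) ^ (α - 1)) / (1 - (p : ℝ) ^ (-α)))⁻¹ *
            (‖x‖ ^ (α - 1) - (p : ℝ) ^ (α - 1))) :
    ∀ ξ : ℚ_[p],
      ∫ x in {x : ℚ_[p] | ‖x‖ ≤ 1}, (Jα x : ℂ) * χ (ξ * x) ∂μ
        = (((max 1 ‖ξ‖) ^ (-α) : ℝ) : ℂ) := by
  intro ξ
  have hp := bk_p_pos (p := p)
  have hp1 := bk_p_gt (p := p)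
  set q : ℝ := (p : ℝ) ^ (-α) with hq
  have hq0 : 0 < q := Real.rpow_pos_of_pos hp _
  have hq1 : q < 1 := Real.rpow_lt_one_of_one_lt_of_neg hp1 (by linarith)
  set r : ℝ := (p : ℝ) ^ (1 - α) with hr
  have hr0 : 0 < r := Real.rpow_pos_of_pos hp _
  have hrq : ∀ n : ℕ, r ^ n * ((p : ℝ) ^ n)⁻¹ = q ^ n := by
    intro n
    rw [← inv_pow, ← mul_pow]
    congr 1
    rw [hr, hq, sub_eq_add_neg, Real.rpow_add hp, Real.rpow_one]
    field_simp
  set F : ℕ → ℚ_[p] → ℂ := fun n =>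
    (bkB p n).indicator (fun x => (((1 - q) * r ^ n : ℝ) : ℂ) * χ (ξ * x)) with hF
  have hFi : ∀ n, Integrable (F n) μ := by
    intro n
    rw [hF, integrable_indicator_iff (bkB_closed n).measurableSet]
    exact (bk_integrable μ hμ χ hχ₁ n ξ).const_mul _
  have hFn : ∀ n, ∫ x, ‖F n x‖ ∂μ = (1 - q) * q ^ n := by
    intro n
    have : ∀ x, ‖F n x‖ = (bkB p n).indicator (fun _ => (1 - q) * r ^ n) x := by
      intro x
      rw [hF]
      simp only
      rw [norm_indicator_eq_indicator_norm]
      congr 1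
      funext y
      rw [norm_mul, bk_chi_norm χ hχ₁, mul_one, Complex.norm_real, Real.norm_of_nonneg]
      exact mul_nonneg (by linarith) (pow_pos hr0 n).le
    simp_rw [this]
    rw [integral_indicator (bkB_closed n).measurableSet, setIntegral_const,
      bk_meas μ hμ χ hχ₁ hχ₂ n, smul_eq_mul, ← hrq n]
    ring
  have hgeo : HasSum (fun n : ℕ => (1 - q) * q ^ n) 1 := by
    have := (hasSum_geometric_of_lt_one hq0.le hq1).mul_left (1 - q)
    rwa [mul_inv_cancel₀ (by linarith)] at this
  have hS := hasSum_integral_of_summable_integral_norm hFi (by simp_rw [hFn]; exact hgeo.summable)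
  have hFint : ∀ n, ∫ x, F n x ∂μ
      = if ‖ξ‖ ≤ (p : ℝ) ^ n then (((1 - q) * q ^ n : ℝ) : ℂ) else 0 := by
    intro n
    rw [hF]
    simp only
    rw [integral_indicator (bkB_closed n).measurableSet, integral_const_mul,
      bk_int μ hμ χ hχ₁ hχ₂ n ξ]
    split_ifs with h
    · rw [← Complex.ofReal_mul, ← hrq n, mul_assoc]
    · simp
  simp_rw [hFint] at hS
  obtain ⟨m, hm, hmn⟩ := bk_level ξ
  have hS2 : HasSum (fun n : ℕ => if ‖ξ‖ ≤ (p : ℝ) ^ n then (((1 - q) * q ^ n : ℝ) : ℂ) else 0)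
      ((q ^ m : ℝ) : ℂ) := by
    rw [← (add_left_injective m).hasSum_iff]
    · have h6 := Complex.hasSum_ofReal.2 (hgeo.mul_left (q ^ m))
      rw [mul_one] at h6
      refine h6.congr_fun ?_
      intro n
      simp only [Function.comp]
      rw [if_pos ((hmn _).2 (Nat.le_add_left m n)), pow_add]
      congr 1
      ring
    · intro n hn
      rw [if_neg]
      intro h
      exact hn ⟨n - m, Nat.sub_add_cancel ((hmn n).1 h)⟩
  have hqm : (max 1 ‖ξ‖) ^ (-α) = q ^ m := by
    rw [hm, hq, ← Real.rpow_natCast, ← Real.rpow_natCast, ← Real.rpow_mul hp.le,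
      ← Real.rpow_mul hp.le, mul_comm]
  rw [hqm, hS2.unique hS, ← bkB_zero, ← integral_indicator (bkB_closed 0).measurableSet]
  apply integral_congr_ae
  have h0 : ∀ᵐ x ∂μ, x ≠ 0 := by
    rw [ae_iff]
    simp
  filter_upwards [h0] with x hx0
  by_cases hx : x ∈ bkB p 0
  · obtain ⟨k, hk, hkn⟩ := bk_ball x hx0 hx
    rw [Set.indicator_of_mem hx, tsum_eq_sum (s := Finset.range (k + 1))]
    · have h7 : ∀ n ∈ Finset.range (k + 1),
          F n x = (((1 - q) * r ^ n : ℝ) : ℂ) * χ (ξ * x) := by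
        intro n hn
        exact Set.indicator_of_mem ((hkn n).2 (Nat.lt_succ_iff.1 (Finset.mem_range.1 hn))) _
      rw [Finset.sum_congr rfl h7, ← Finset.sum_mul, ← Complex.ofReal_sum, hJα]
      simp only
      rw [hk, bk_J α hα k]
    · intro n hn
      refine Set.indicator_of_notMem (fun h => hn ?_) _
      exact Finset.mem_range.2 (Nat.lt_succ_iff.2 ((hkn n).1 h))
  · rw [Set.indicator_of_notMem hx]
    have : ∀ n, F n x = 0 := fun n => Set.indicator_of_notMem (fun h => hx (bkB_mono n h)) _
    simp [this]
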